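/- arXiv:1907.07047 — 10 statements merged into one kernel-verified Lean document; each statement's English description precedes it below -/
import Mathlib

section
/- Let S be a semiring and let L →f M →g N be S-linear maps of S-semimodules with f surjective. Then: (a) g is i-normal if and only if g∘f is i-normal; (b) if g∘f is k-normal then g is k-normal, and if g∘f is normal then g is normal; (c) if moreover f is k-normal, then g is k-normal if and only if g∘f is k-normal, and g is normal if and only if g∘f is normal. -/
open TensorProduct

section Defs

/-- An `S`-linear map `f` is *k-normal* if whenever `f m = f m'` there exist
`k, k' ∈ ker f` with `m + k = m' + k'`. -/
def KNormal {S : Type*} [Semiring S] {L M : Type*} [AddCommMonoid L] [AddCommMonoid M]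
    [Module S L] [Module S M] (f : L →ₗ[S] M) : Prop :=
  ∀ m m' : L, f m = f m' → ∃ k k' : L, f k = 0 ∧ f k' = 0 ∧ m + k = m' + k'

/-- An `S`-linear map `f` is *i-normal* if whenever `m + f l = f l'` then `m` is in the
image of `f`. -/
def INormal {S : Type*} [Semiring S] {L M : Type*} [AddCommMonoid L] [AddCommMonoid M]
    [Module S L] [Module S M] (f : L →ₗ[S] M) : Prop :=
  ∀ (m : M) (l l' : L), m + f l = f l' → ∃ x : L, f x = m

/-- An `S`-linear map is *normal* if it is both k-normal and i-normal. -/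
def IsNormalMap {S : Type*} [Semiring S] {L M : Type*} [AddCommMonoid L] [AddCommMonoid M]
    [Module S L] [Module S M] (f : L →ₗ[S] M) : Prop :=
  KNormal f ∧ INormal f

/-- A sequence `L →f M →g N` is *exact* (in the sense of Abuhlail) if `g` is k-normal and
`f(L) = ker g`. -/
def IsExactSeq {S : Type*} [Semiring S] {L M N : Type*}
    [AddCommMonoid L] [AddCommMonoid M] [AddCommMonoid N]
    [Module S L] [Module S M] [Module S N]
    (f : L →ₗ[S] M) (g : M →ₗ[S] N) : Prop :=
  KNormal g ∧ ∀ m : M, g m = 0 ↔ ∃ l : L, f l = m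

/-- A sequence `L →f M →g N` is *semi-exact* if the subtractive closure of `f(L)`
equals `ker g`. -/
def IsSemiExactSeq {S : Type*} [Semiring S] {L M N : Type*}
    [AddCommMonoid L] [AddCommMonoid M] [AddCommMonoid N]
    [Module S L] [Module S M] [Module S N]
    (f : L →ₗ[S] M) (g : M →ₗ[S] N) : Prop :=
  ∀ m : M, g m = 0 ↔ ∃ l l' : L, m + f l = f l'

/-- `0 → L →f M →g N → 0` is a *short exact sequence*: `f` is injective, `f(L) = ker g`,
and `g` is surjective and k-normal. -/
def IsShortExactSeq {S : Type*} [Semiring S] {L M N : Type*}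
    [AddCommMonoid L] [AddCommMonoid M] [AddCommMonoid N]
    [Module S L] [Module S M] [Module S N]
    (f : L →ₗ[S] M) (g : M →ₗ[S] N) : Prop :=
  Function.Injective f ∧ (∀ m : M, g m = 0 ↔ ∃ l : L, f l = m) ∧
    Function.Surjective g ∧ KNormal g

/-- A subset `T` of an additive commutative monoid is *subtractive* if
`m + l ∈ T` and `l ∈ T` imply `m ∈ T`. -/
def SubtractiveSet {M : Type*} [AddCommMonoid M] (T : Set M) : Prop :=
  ∀ m l : M, m + l ∈ T → l ∈ T → m ∈ T

/-- `F` is `M`-m-flat: for every submodule `L ≤ M`, `id_F ⊗ ι_L` is injective. -/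
def MMFlat (S : Type*) [CommSemiring S] (F M : Type*) [AddCommMonoid F] [AddCommMonoid M]
    [Module S F] [Module S M] : Prop :=
  ∀ L : Submodule S M, Function.Injective (LinearMap.lTensor F L.subtype)

/-- `F` is `M`-i-flat: for every subtractive submodule `L ≤ M`, `id_F ⊗ ι_L` is injective. -/
def MIFlat (S : Type*) [CommSemiring S] (F M : Type*) [AddCommMonoid F] [AddCommMonoid M]
    [Module S F] [Module S M] : Prop :=
  ∀ L : Submodule S M, SubtractiveSet (L : Set M) →
    Function.Injective (LinearMap.lTensor F L.subtype)

/-- `F` is `M`-e-flat (normally `M`-flat): for every subtractive submodule `L ≤ M`,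
`id_F ⊗ ι_L` is injective with subtractive image. -/
def MEFlat (S : Type*) [CommSemiring S] (F M : Type*) [AddCommMonoid F] [AddCommMonoid M]
    [Module S F] [Module S M] : Prop :=
  ∀ L : Submodule S M, SubtractiveSet (L : Set M) →
    Function.Injective (LinearMap.lTensor F L.subtype) ∧
      SubtractiveSet (Set.range (LinearMap.lTensor F L.subtype))

/-- `F` is *e-flat*: `F ⊗ -` preserves short exact sequences. -/
def EFlat (S : Type*) [CommSemiring S] (F : Type*) [AddCommMonoid F] [Module S F] : Prop :=
  ∀ (L M N : Type*) [AddCommMonoid L] [AddCommMonoid M] [AddCommMonoid N]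
    [Module S L] [Module S M] [Module S N] (f : L →ₗ[S] M) (g : M →ₗ[S] N),
    IsShortExactSeq f g →
      IsShortExactSeq (LinearMap.lTensor F f) (LinearMap.lTensor F g)

/-- `F` is *m-flat*: `F` is `M`-m-flat for every `S`-semimodule `M`. -/
def MFlatAll (S : Type*) [CommSemiring S] (F : Type*) [AddCommMonoid F] [Module S F] : Prop :=
  ∀ (M : Type*) [AddCommMonoid M] [Module S M] (L : Submodule S M),
    Function.Injective (LinearMap.lTensor F L.subtype)

/-- `A` is `S`-m-flat. -/
def SMFlat (S : Type*) [CommSemiring S] (A : Type*) [AddCommMonoid A] [Module S A] : Prop :=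
  ∀ I : Submodule S S, Function.Injective (LinearMap.lTensor A I.subtype)

/-- `A` is `S`-i-flat. -/
def SIFlat (S : Type*) [CommSemiring S] (A : Type*) [AddCommMonoid A] [Module S A] : Prop :=
  ∀ I : Submodule S S, SubtractiveSet (I : Set S) →
    Function.Injective (LinearMap.lTensor A I.subtype)

/-- `A` is `S`-e-flat. -/
def SEFlat (S : Type*) [CommSemiring S] (A : Type*) [AddCommMonoid A] [Module S A] : Prop :=
  ∀ I : Submodule S S, SubtractiveSet (I : Set S) →
    Function.Injective (LinearMap.lTensor A I.subtype) ∧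
      SubtractiveSet (Set.range (LinearMap.lTensor A I.subtype))

/-- The canonical map `θ_I : A ⊗[S] I → A`, `a ⊗ i ↦ i • a`. -/
noncomputable def thetaI (S : Type*) [CommSemiring S] (A : Type*) [AddCommMonoid A] [Module S A]
    (I : Submodule S S) : TensorProduct S A I →ₗ[S] A :=
  (TensorProduct.rid S A).toLinearMap ∘ₗ LinearMap.lTensor A I.subtype

end Defs

/-- behaviour of k-normality, i-normality and normality under composition
with a surjective map. -/
theorem stmt1 {S L M N : Type*} [Semiring S]
    [AddCommMonoid L] [AddCommMonoid M] [AddCommMonoid N]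
    [Module S L] [Module S M] [Module S N]
    (f : L →ₗ[S] M) (g : M →ₗ[S] N) (hf : Function.Surjective f) :
    (INormal g ↔ INormal (g ∘ₗ f)) ∧
    ((KNormal (g ∘ₗ f) → KNormal g) ∧ (IsNormalMap (g ∘ₗ f) → IsNormalMap g)) ∧
    (KNormal f →
      ((KNormal g ↔ KNormal (g ∘ₗ f)) ∧ (IsNormalMap g ↔ IsNormalMap (g ∘ₗ f)))) := by
  have hI : INormal g ↔ INormal (g ∘ₗ f) := by
    constructor
    · intro h n l l' e
      obtain ⟨x, hx⟩ := h n (f l) (f l') e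
      obtain ⟨y, rfl⟩ := hf x
      exact ⟨y, hx⟩
    · intro h n m m' e
      obtain ⟨l, rfl⟩ := hf m
      obtain ⟨l', rfl⟩ := hf m'
      obtain ⟨x, hx⟩ := h n l l' e
      exact ⟨f x, hx⟩
  have hK : KNormal (g ∘ₗ f) → KNormal g := by
    intro h m m' e
    obtain ⟨l, rfl⟩ := hf m
    obtain ⟨l', rfl⟩ := hf m'
    obtain ⟨k, k', hk, hk', e'⟩ := h l l' e
    exact ⟨f k, f k', hk, hk', by rw [← map_add, e', map_add]⟩
  have hK' : KNormal f → KNormal g → KNormal (g ∘ₗ f) := by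
    intro h1 h2 l l' e
    obtain ⟨a, a', ha, ha', e'⟩ := h2 (f l) (f l') e
    obtain ⟨b, rfl⟩ := hf a
    obtain ⟨b', rfl⟩ := hf a'
    obtain ⟨c, c', hc, hc', e2⟩ := h1 (l + b) (l' + b') (by rw [map_add, map_add, e'])
    refine ⟨b + c, b' + c', ?_, ?_, ?_⟩
    · simp [hc, ha]
    · simp [hc', ha']
    · rw [← add_assoc, e2, add_assoc]
  exact ⟨hI, ⟨hK, fun h => ⟨hK h.1, hI.2 h.2⟩⟩, fun h1 =>
    ⟨⟨hK' h1, hK⟩, ⟨fun h => ⟨hK' h1 h.1, hI.1 h.2⟩, fun h => ⟨hK h.1, hI.2 h.2⟩⟩⟩⟩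
end

section
/- Let S be a semiring and let L →f M →g N be S-linear maps of S-semimodules. The following are equivalent: (1) the sequence 0 → L →f M →g N → 0 is a short exact sequence (f injective, f(L) = ker g, g surjective and k-normal); (2) f is injective with f(L) = ker g, g is surjective, and for all m, m' ∈ M one has g(m) = g(m') if and only if there exist l, l' ∈ L with m + f(l) = m' + f(l'); (3) f is injective, f(L) = ker g, and g is surjective and normal. Moreover, in this case both f and g are normal morphisms. -/
open TensorProduct

/-- characterizations of short exact sequences of semimodules. -/
theorem stmt2 {S L M N : Type*} [Semiring S]
    [AddCommMonoid L] [AddCommMonoid M] [AddCommMonoid N]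
    [Module S L] [Module S M] [Module S N]
    (f : L →ₗ[S] M) (g : M →ₗ[S] N) :
    ((IsShortExactSeq f g ↔
        (Function.Injective f ∧ (∀ m : M, g m = 0 ↔ ∃ l : L, f l = m) ∧
          Function.Surjective g ∧
          ∀ m m' : M, g m = g m' ↔ ∃ l l' : L, m + f l = m' + f l')) ∧
      (IsShortExactSeq f g ↔
        (Function.Injective f ∧ (∀ m : M, g m = 0 ↔ ∃ l : L, f l = m) ∧
          Function.Surjective g ∧ IsNormalMap g))) ∧
    (IsShortExactSeq f g → IsNormalMap f ∧ IsNormalMap g) := by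
  have fg : (∀ m : M, g m = 0 ↔ ∃ l : L, f l = m) → ∀ l, g (f l) = 0 :=
    fun h l => (h _).2 ⟨l, rfl⟩
  have gn : IsShortExactSeq f g → IsNormalMap g := by
    rintro ⟨_, _, hs, hk⟩
    exact ⟨hk, fun m _ _ _ => hs m⟩
  refine ⟨⟨⟨?_, ?_⟩, ⟨?_, ?_⟩⟩, ?_⟩
  · rintro ⟨hi, he, hs, hk⟩
    refine ⟨hi, he, hs, fun m m' => ⟨fun h => ?_, ?_⟩⟩
    · obtain ⟨k, k', h1, h2, h3⟩ := hk m m' h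
      obtain ⟨l, rfl⟩ := (he k).1 h1
      obtain ⟨l', rfl⟩ := (he k').1 h2
      exact ⟨l, l', h3⟩
    · rintro ⟨l, l', h⟩
      have := congrArg g h
      simpa [fg he] using this
  · rintro ⟨hi, he, hs, hk⟩
    refine ⟨hi, he, hs, fun m m' h => ?_⟩
    obtain ⟨l, l', h'⟩ := (hk m m').1 h
    exact ⟨f l, f l', fg he l, fg he l', h'⟩
  · intro h
    exact ⟨h.1, h.2.1, h.2.2.1, gn h⟩
  · rintro ⟨hi, he, hs, hk⟩
    exact ⟨hi, he, hs, hk.1⟩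
  · intro h
    refine ⟨⟨fun m m' e => ⟨0, 0, map_zero f, map_zero f, by rw [h.1 e]⟩, ?_⟩, gn h⟩
    intro m l l' e
    apply (h.2.1 m).1
    have := congrArg g e
    simpa [fg h.2.1] using this
end

section
/- Let S be a semiring and consider a commutative diagram of S-semimodules with rows A' →i A →p A'' and B' →j B →q B'' and vertical maps f : A' → B', g : A → B satisfying g∘i = j∘f, where both rows are semi-exact (the subtractive closure of the image of i equals ker p, and the subtractive closure of the image of j equals ker q) and p is a surjective k-normal map. Then there exists a unique S-linear map h : A'' → B'' with h∘p = q∘g. Moreover: (1) if in addition q is surjective and k-normal, f is surjective and g is injective (respectively bijective), then h is injective (respectively bijective); (2) if in addition A and B are additively cancellative and j, f and h are injective, then g is injective. -/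
open TensorProduct

/-- the induced map on "cokernels" for a commutative diagram with
semi-exact rows, together with injectivity/bijectivity statements. -/
theorem stmt3 {S A' A A'' B' B B'' : Type*} [Semiring S]
    [AddCommMonoid A'] [AddCommMonoid A] [AddCommMonoid A'']
    [AddCommMonoid B'] [AddCommMonoid B] [AddCommMonoid B'']
    [Module S A'] [Module S A] [Module S A'']
    [Module S B'] [Module S B] [Module S B'']
    (i : A' →ₗ[S] A) (p : A →ₗ[S] A'') (j : B' →ₗ[S] B) (q : B →ₗ[S] B'')
    (f : A' →ₗ[S] B') (g : A →ₗ[S] B)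
    (hcomm : g ∘ₗ i = j ∘ₗ f)
    (hrow1 : ∀ a : A, p a = 0 ↔ ∃ x x' : A', a + i x = i x')
    (hrow2 : ∀ b : B, q b = 0 ↔ ∃ y y' : B', b + j y = j y')
    (hps : Function.Surjective p) (hpk : KNormal p) :
    (∃! h : A'' →ₗ[S] B'', h ∘ₗ p = q ∘ₗ g) ∧
    ∀ h : A'' →ₗ[S] B'', h ∘ₗ p = q ∘ₗ g →
      ((Function.Surjective q → KNormal q → Function.Surjective f →
          ((Function.Injective g → Function.Injective h) ∧
            (Function.Bijective g → Function.Bijective h))) ∧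
        ((∀ a b c : A, a + b = a + c → b = c) → (∀ a b c : B, a + b = a + c → b = c) →
          Function.Injective j → Function.Injective f → Function.Injective h →
          Function.Injective g)) := by
  have hc : ∀ x, g (i x) = j (f x) := fun x => LinearMap.congr_fun hcomm x
  have hpi : ∀ x, p (i x) = 0 := fun x => (hrow1 _).2 ⟨0, x, by simp⟩
  have hqg : ∀ k, p k = 0 → q (g k) = 0 := by
    intro k hk
    obtain ⟨x, x', e⟩ := (hrow1 k).1 hk
    refine (hrow2 _).2 ⟨f x, f x', ?_⟩
    rw [← hc, ← hc, ← map_add, e]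
  have hwd : ∀ m m', p m = p m' → q (g m) = q (g m') := by
    intro m m' e
    obtain ⟨k, k', hk, hk', e⟩ := hpk m m' e
    have := congrArg (fun t => q (g t)) e
    simpa [hqg k hk, hqg k' hk'] using this
  refine ⟨?_, ?_⟩
  · choose s hs using hps
    refine ⟨{ toFun := fun a => q (g (s a)), map_add' := ?_, map_smul' := ?_ }, ?_, ?_⟩
    · intro a b
      rw [← map_add, ← map_add]
      apply hwd
      simp [hs]
    · intro r a
      simp only [RingHom.id_apply]
      rw [← map_smul, ← map_smul]
      apply hwd
      simp [hs]
    · ext a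
      exact hwd _ _ (hs _)
    · intro h' e
      ext a
      have := LinearMap.congr_fun e (s a)
      simpa [hs] using this
  · intro h hh
    have hh' : ∀ a, h (p a) = q (g a) := fun a => LinearMap.congr_fun hh a
    refine ⟨?_, ?_⟩
    · intro hqs hqk hf
      have key : Function.Injective g → Function.Injective h := by
        intro hg u v e
        obtain ⟨a, rfl⟩ := hps u
        obtain ⟨b, rfl⟩ := hps v
        rw [hh', hh'] at e
        obtain ⟨k, k', hk, hk', e⟩ := hqk _ _ e
        obtain ⟨y, y', ey⟩ := (hrow2 k).1 hk
        obtain ⟨z, z', ez⟩ := (hrow2 k').1 hk'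
        obtain ⟨y, rfl⟩ := hf y
        obtain ⟨y', rfl⟩ := hf y'
        obtain ⟨z, rfl⟩ := hf z
        obtain ⟨z', rfl⟩ := hf z'
        have e2 : a + (i y' + i z) = b + (i z' + i y) := by
          apply hg
          simp only [map_add, hc]
          rw [← ey, ← ez]
          calc g a + (k + j (f y) + j (f z)) = (g a + k) + (j (f y) + j (f z)) := by abel
            _ = (g b + k') + (j (f y) + j (f z)) := by rw [e]
            _ = _ := by abel
        have := congrArg p e2
        simpa [hpi] using this
      refine ⟨key, fun hg => ⟨key hg.1, fun b => ?_⟩⟩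
      obtain ⟨b, rfl⟩ := hqs b
      obtain ⟨a, rfl⟩ := hg.2 b
      exact ⟨p a, hh' a⟩
    · intro hA hB hj hf hi a b e
      have e1 : p a = p b := hi (by rw [hh', hh', e])
      obtain ⟨k, k', hk, hk', e1⟩ := hpk _ _ e1
      obtain ⟨y, y', ey⟩ := (hrow1 k).1 hk
      obtain ⟨z, z', ez⟩ := (hrow1 k').1 hk'
      have e2 : a + i (y' + z) = b + i (z' + y) := by
        rw [map_add, map_add, ← ey, ← ez]
        calc a + (k + i y + i z) = (a + k) + (i y + i z) := by abel
          _ = (b + k') + (i y + i z) := by rw [e1]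
          _ = _ := by abel
      have e3 := congrArg g e2
      rw [map_add g, map_add g, e, hc, hc] at e3
      have e4 : y' + z = z' + y := hf (hj (hB _ _ _ e3))
      rw [e4, add_comm a, add_comm b] at e2
      exact hA _ _ _ e2
end

section
/- Let S be a commutative semiring, G an S-semimodule, and L →f M →g N S-linear maps of S-semimodules. Consider the induced maps id_G ⊗ f : G⊗L → G⊗M and id_G ⊗ g : G⊗M → G⊗N. Then: (1) if g is surjective and normal, then id_G ⊗ g is surjective and normal; (2) if the sequence L →f M →g N → 0 is semi-exact with g surjective and normal, then G⊗L → G⊗M → G⊗N → 0 is semi-exact with id_G ⊗ g surjective and normal; (3) if L →f M →g N → 0 is exact with g surjective, and id_G ⊗ f is i-normal, then G⊗L → G⊗M → G⊗N → 0 is exact with id_G ⊗ g surjective. -/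
open TensorProduct

/-- the congruence on `G ⊗ M` modulo the image of `G ⊗ ker g`. -/
def tensorKerCon {S : Type*} (G : Type*) {M N : Type*} [CommSemiring S]
    [AddCommMonoid G] [AddCommMonoid M] [AddCommMonoid N]
    [Module S G] [Module S M] [Module S N] (g : M →ₗ[S] N) : AddCon (G ⊗[S] M) where
  r x y := ∃ a b : G ⊗[S] (LinearMap.ker g),
    x + LinearMap.lTensor G (LinearMap.ker g).subtype a =
      y + LinearMap.lTensor G (LinearMap.ker g).subtype b
  iseqv :=
    { refl := fun x => ⟨0, 0, rfl⟩
      symm := fun ⟨a, b, h⟩ => ⟨b, a, h.symm⟩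
      trans := by
        rintro x y z ⟨a, b, h⟩ ⟨c, d, h'⟩
        refine ⟨a + c, d + b, ?_⟩
        rw [map_add, map_add, ← add_assoc, h, add_right_comm, h', add_assoc] }
  add' := by
    rintro w x y z ⟨a, b, h⟩ ⟨c, d, h'⟩
    refine ⟨a + c, b + d, ?_⟩
    rw [map_add, map_add, add_add_add_comm, h, h', add_add_add_comm]

theorem tensor_key {S G M N : Type*} [CommSemiring S]
    [AddCommMonoid G] [AddCommMonoid M] [AddCommMonoid N]
    [Module S G] [Module S M] [Module S N] (g : M →ₗ[S] N)
    (hs : Function.Surjective g) (hk : KNormal g) (x y : G ⊗[S] M)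
    (h : LinearMap.lTensor G g x = LinearMap.lTensor G g y) :
    ∃ a b : G ⊗[S] (LinearMap.ker g),
    x + LinearMap.lTensor G (LinearMap.ker g).subtype a =
      y + LinearMap.lTensor G (LinearMap.ker g).subtype b := by
  let c := tensorKerCon G g
  have wd : ∀ (u : G) (m m' : M), g m = g m' →
      ((u ⊗ₜ[S] m : G ⊗[S] M) : c.Quotient) = ((u ⊗ₜ[S] m' : G ⊗[S] M) : c.Quotient) := by
    intro u m m' hm
    obtain ⟨k, k', h1, h2, h3⟩ := hk m m' hm
    refine (AddCon.eq c).2 ⟨u ⊗ₜ ⟨k, h1⟩, u ⊗ₜ ⟨k', h2⟩, ?_⟩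
    simp only [LinearMap.lTensor_tmul, Submodule.subtype_apply]
    rw [← TensorProduct.tmul_add, h3, TensorProduct.tmul_add]
  let s := Function.surjInv hs
  have hsg : ∀ n, g (s n) = n := Function.surjInv_eq hs
  let φ : G ⊗[S] N →+ c.Quotient := TensorProduct.liftAddHom
    { toFun := fun u =>
        { toFun := fun n => ((u ⊗ₜ[S] s n : G ⊗[S] M) : c.Quotient)
          map_zero' := by
            rw [wd u (s 0) 0 (by rw [hsg, map_zero]), TensorProduct.tmul_zero]; rfl
          map_add' := fun n n' => by
            rw [wd u (s (n + n')) (s n + s n') (by rw [map_add, hsg, hsg, hsg]),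
              TensorProduct.tmul_add]; rfl }
      map_zero' := by
        ext n
        change ((((0 : G) ⊗ₜ[S] s n : G ⊗[S] M)) : c.Quotient) = 0
        rw [TensorProduct.zero_tmul]; rfl
      map_add' := fun u v => by
        ext n
        change ((((u + v) ⊗ₜ[S] s n : G ⊗[S] M)) : c.Quotient) = _
        rw [TensorProduct.add_tmul]; rfl }
    (fun r u n => by
      change ((((r • u) ⊗ₜ[S] s n : G ⊗[S] M)) : c.Quotient) =
        (((u ⊗ₜ[S] s (r • n) : G ⊗[S] M)) : c.Quotient)
      rw [wd u (s (r • n)) (r • s n) (by rw [map_smul, hsg, hsg]), TensorProduct.smul_tmul])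
  have hφ : ∀ z : G ⊗[S] M, φ (LinearMap.lTensor G g z) = (z : c.Quotient) := by
    intro z
    induction z using TensorProduct.induction_on with
    | zero => rw [map_zero, map_zero]; rfl
    | tmul u m => exact wd u (s (g m)) m (hsg _)
    | add a b ha hb => rw [map_add, map_add, ha, hb]; rfl
  exact (AddCon.eq c).1 (by rw [← hφ, ← hφ, h])

theorem tensor_ker_zero {S G M N : Type*} [CommSemiring S]
    [AddCommMonoid G] [AddCommMonoid M] [AddCommMonoid N]
    [Module S G] [Module S M] [Module S N] (g : M →ₗ[S] N) (a : G ⊗[S] (LinearMap.ker g)) :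
    LinearMap.lTensor G g (LinearMap.lTensor G (LinearMap.ker g).subtype a) = 0 := by
  induction a using TensorProduct.induction_on with
  | zero => simp
  | tmul u m => simp
  | add a b ha hb => rw [map_add, map_add, ha, hb, add_zero]

theorem tensor_knormal {S G M N : Type*} [CommSemiring S]
    [AddCommMonoid G] [AddCommMonoid M] [AddCommMonoid N]
    [Module S G] [Module S M] [Module S N] (g : M →ₗ[S] N)
    (hs : Function.Surjective g) (hk : KNormal g) : KNormal (LinearMap.lTensor G g) := by
  intro x y h
  obtain ⟨a, b, hab⟩ := tensor_key g hs hk x y h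
  exact ⟨_, _, tensor_ker_zero g a, tensor_ker_zero g b, hab⟩

theorem tensor_semiexact {S G L M N : Type*} [CommSemiring S]
    [AddCommMonoid G] [AddCommMonoid L] [AddCommMonoid M] [AddCommMonoid N]
    [Module S G] [Module S L] [Module S M] [Module S N]
    (f : L →ₗ[S] M) (g : M →ₗ[S] N) (he : IsSemiExactSeq f g)
    (hs : Function.Surjective g) (hk : KNormal g) :
    IsSemiExactSeq (LinearMap.lTensor G f) (LinearMap.lTensor G g) := by
  have hgf : ∀ z : G ⊗[S] L, LinearMap.lTensor G g (LinearMap.lTensor G f z) = 0 := by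
    intro z
    induction z using TensorProduct.induction_on with
    | zero => simp
    | tmul u l =>
      have : g (f l) = 0 := (he (f l)).2 ⟨0, l, by simp⟩
      simp [this]
    | add a b ha hb => rw [map_add, map_add, ha, hb, add_zero]
  have hK : ∀ a : G ⊗[S] (LinearMap.ker g), ∃ l l' : G ⊗[S] L,
      LinearMap.lTensor G (LinearMap.ker g).subtype a + LinearMap.lTensor G f l =
        LinearMap.lTensor G f l' := by
    intro a
    induction a using TensorProduct.induction_on with
    | zero => exact ⟨0, 0, by simp⟩
    | tmul u m =>
      obtain ⟨l, l', h⟩ := (he m).1 m.2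
      refine ⟨u ⊗ₜ l, u ⊗ₜ l', ?_⟩
      simp only [LinearMap.lTensor_tmul, Submodule.subtype_apply]
      rw [← TensorProduct.tmul_add, h]
    | add a b ha hb =>
      obtain ⟨l, l', h⟩ := ha
      obtain ⟨k, k', h'⟩ := hb
      refine ⟨l + k, l' + k', ?_⟩
      rw [map_add, map_add, map_add, add_add_add_comm, h, h']
  intro m
  constructor
  · intro h
    obtain ⟨a, b, hab⟩ := tensor_key g hs hk m 0 (by rw [h, map_zero])
    obtain ⟨l, l', h1⟩ := hK a
    obtain ⟨k, k', h2⟩ := hK b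
    refine ⟨l' + k, k' + l, ?_⟩
    rw [map_add, map_add, ← h1, ← h2, ← add_assoc, ← add_assoc, hab, zero_add, add_right_comm]
  · rintro ⟨l, l', h⟩
    have := congrArg (LinearMap.lTensor G g) h
    rwa [map_add, hgf, hgf, add_zero] at this

/-- right-exactness properties of the tensor functor `G ⊗ -`. -/
theorem stmt5 {S G L M N : Type*} [CommSemiring S]
    [AddCommMonoid G] [AddCommMonoid L] [AddCommMonoid M] [AddCommMonoid N]
    [Module S G] [Module S L] [Module S M] [Module S N]
    (f : L →ₗ[S] M) (g : M →ₗ[S] N) :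
    ((Function.Surjective g ∧ IsNormalMap g) →
        Function.Surjective (LinearMap.lTensor G g) ∧
          IsNormalMap (LinearMap.lTensor G g)) ∧
    ((IsSemiExactSeq f g ∧ Function.Surjective g ∧ IsNormalMap g) →
        IsSemiExactSeq (LinearMap.lTensor G f) (LinearMap.lTensor G g) ∧
          Function.Surjective (LinearMap.lTensor G g) ∧
          IsNormalMap (LinearMap.lTensor G g)) ∧
    ((IsExactSeq f g ∧ Function.Surjective g ∧ INormal (LinearMap.lTensor G f)) →
        IsExactSeq (LinearMap.lTensor G f) (LinearMap.lTensor G g) ∧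
          Function.Surjective (LinearMap.lTensor G g)) := by
  have hS : Function.Surjective g → Function.Surjective (LinearMap.lTensor G g) :=
    fun h => LinearMap.lTensor_surjective G h
  have h1 : (Function.Surjective g ∧ IsNormalMap g) →
        Function.Surjective (LinearMap.lTensor G g) ∧
          IsNormalMap (LinearMap.lTensor G g) := fun ⟨hs, hn⟩ =>
    ⟨hS hs, tensor_knormal g hs hn.1, fun m _ _ _ => hS hs m⟩
  refine ⟨h1, fun ⟨he, hs, hn⟩ => ⟨tensor_semiexact f g he hs hn.1, h1 ⟨hs, hn⟩⟩, ?_⟩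
  rintro ⟨⟨hk, he⟩, hs, hi⟩
  have hse : IsSemiExactSeq f g := by
    intro m
    constructor
    · intro h
      obtain ⟨l, rfl⟩ := (he m).1 h
      exact ⟨0, l, by simp⟩
    · rintro ⟨l, l', h⟩
      have := congrArg g h
      rwa [map_add, (he (f l)).2 ⟨l, rfl⟩, (he (f l')).2 ⟨l', rfl⟩, add_zero] at this
  have ht := tensor_semiexact (G := G) f g hse hs hk
  refine ⟨⟨tensor_knormal g hs hk, fun m => ⟨fun h => ?_, ?_⟩⟩, hS hs⟩
  · obtain ⟨l, l', h'⟩ := (ht m).1 h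
    exact hi m l l' h'
  · rintro ⟨l, rfl⟩
    exact (ht _).2 ⟨0, l, by simp⟩
end

section
/- Let S be a commutative semiring, M an S-semimodule, and F an S-semimodule that is M-i-flat (respectively M-e-flat, respectively M-m-flat). If F' is a retract of F, i.e. there exist S-linear maps ψ : F' → F and θ : F → F' with θ∘ψ = id_{F'}, then F' is M-i-flat (respectively M-e-flat, respectively M-m-flat). -/
open TensorProduct

/-- retracts of `M`-i-flat (resp. `M`-e-flat, `M`-m-flat) semimodules
are `M`-i-flat (resp. `M`-e-flat, `M`-m-flat). -/
theorem stmt10 {S M F F' : Type*} [CommSemiring S]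
    [AddCommMonoid M] [AddCommMonoid F] [AddCommMonoid F']
    [Module S M] [Module S F] [Module S F']
    (ψ : F' →ₗ[S] F) (θ : F →ₗ[S] F') (hret : θ ∘ₗ ψ = LinearMap.id) :
    (MIFlat S F M → MIFlat S F' M) ∧
    (MEFlat S F M → MEFlat S F' M) ∧
    (MMFlat S F M → MMFlat S F' M) := by
  have hid : ∀ (N : Type _) [AddCommMonoid N] [Module S N] (x : F' ⊗[S] N),
      LinearMap.rTensor N θ (LinearMap.rTensor N ψ x) = x := by
    intro N _ _ x
    rw [← LinearMap.comp_apply, ← LinearMap.rTensor_comp, hret, LinearMap.rTensor_id,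
      LinearMap.id_apply]
  have hψ : ∀ (L : Submodule S M) (x : F' ⊗[S] L),
      LinearMap.lTensor F L.subtype (LinearMap.rTensor L ψ x) =
        LinearMap.rTensor M ψ (LinearMap.lTensor F' L.subtype x) := by
    intro L x
    rw [← LinearMap.comp_apply, ← LinearMap.comp_apply, LinearMap.lTensor_comp_rTensor,
      LinearMap.rTensor_comp_lTensor]
  have hθ : ∀ (L : Submodule S M) (x : F ⊗[S] L),
      LinearMap.lTensor F' L.subtype (LinearMap.rTensor L θ x) =
        LinearMap.rTensor M θ (LinearMap.lTensor F L.subtype x) := by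
    intro L x
    rw [← LinearMap.comp_apply, ← LinearMap.comp_apply, LinearMap.lTensor_comp_rTensor,
      LinearMap.rTensor_comp_lTensor]
  have hinj : ∀ L : Submodule S M, Function.Injective (LinearMap.lTensor F L.subtype) →
      Function.Injective (LinearMap.lTensor F' L.subtype) := by
    intro L h x y hxy
    have h1 : LinearMap.rTensor L ψ x = LinearMap.rTensor L ψ y := by
      apply h
      rw [hψ, hψ, hxy]
    rw [← hid L x, h1, hid]
  refine ⟨fun h L hL => hinj L (h L hL), fun h L hL => ⟨hinj L (h L hL).1, ?_⟩,
    fun h L => hinj L (h L)⟩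
  rintro m _ ⟨a, ha⟩ ⟨b, rfl⟩
  obtain ⟨c, hc⟩ := (h L hL).2 (LinearMap.rTensor M ψ m)
    (LinearMap.rTensor M ψ (LinearMap.lTensor F' L.subtype b))
    ⟨LinearMap.rTensor L ψ a, by rw [hψ, ha, map_add]⟩ ⟨LinearMap.rTensor L ψ b, hψ L b⟩
  exact ⟨LinearMap.rTensor L θ c, by rw [hθ, hc, hid]⟩
end

section
/- Let S be a commutative semiring, M an S-semimodule, and {F_λ}_{λ∈Λ} a nonempty family of S-semimodules. Then the direct sum ⊕_{λ∈Λ} F_λ is M-i-flat (respectively M-e-flat, respectively M-m-flat) if and only if F_λ is M-i-flat (respectively M-e-flat, respectively M-m-flat) for every λ ∈ Λ. -/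
open TensorProduct

section Helpers
open DirectSum TensorProduct

variable {S : Type*} [CommSemiring S] {ι : Type*} [DecidableEq ι]
    (F : ι → Type*) [∀ i, AddCommMonoid (F i)] [∀ i, Module S (F i)]
    {L M : Type*} [AddCommMonoid L] [AddCommMonoid M] [Module S L] [Module S M]
    (f : L →ₗ[S] M)

theorem aux_apply (x : (⨁ i, F i) ⊗[S] L) (i : ι) :
    directSumLeft S S F M (LinearMap.lTensor (⨁ i, F i) f x) i =
      LinearMap.lTensor (F i) f (directSumLeft S S F L x i) := by
  induction x using TensorProduct.induction_on with
  | zero => simp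
  | tmul x y => simp
  | add x y hx hy => simp only [map_add, DirectSum.add_apply, hx, hy]

theorem aux_mem (y : (⨁ i, F i) ⊗[S] M) :
    y ∈ Set.range (LinearMap.lTensor (⨁ i, F i) f) ↔
      ∀ i, directSumLeft S S F M y i ∈ Set.range (LinearMap.lTensor (F i) f) := by
  classical
  constructor
  · rintro ⟨x, rfl⟩ i
    exact ⟨_, (aux_apply F f x i).symm⟩
  · intro h
    choose g hg using h
    refine ⟨(directSumLeft S S F L).symm
      (DirectSum.mk _ (DFinsupp.support (directSumLeft S S F M y)) fun i => g i), ?_⟩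
    apply (directSumLeft S S F M).injective
    refine DFinsupp.ext fun i => ?_
    refine (aux_apply F f _ i).trans ?_
    rw [LinearEquiv.apply_symm_apply]
    by_cases hi : i ∈ DFinsupp.support (directSumLeft S S F M y)
    · rw [DirectSum.mk_apply_of_mem hi]
      exact hg i
    · rw [DirectSum.mk_apply_of_notMem hi, map_zero]
      exact (DFinsupp.notMem_support_iff.1 hi).symm

theorem aux_inj : Function.Injective (LinearMap.lTensor (⨁ i, F i) f) ↔
    ∀ i, Function.Injective (LinearMap.lTensor (F i) f) := by
  constructor
  · intro h i a b hab
    have : (directSumLeft S S F L).symm (of (fun i => F i ⊗[S] L) i a) =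
        (directSumLeft S S F L).symm (of (fun i => F i ⊗[S] L) i b) := by
      apply h
      apply (directSumLeft S S F M).injective
      refine DFinsupp.ext fun j => ?_
      refine (aux_apply F f _ j).trans (Eq.trans ?_ (aux_apply F f _ j).symm)
      simp only [LinearEquiv.apply_symm_apply]
      by_cases hj : i = j
      · subst hj
        simpa using hab
      · rw [of_eq_of_ne _ _ _ (Ne.symm hj), of_eq_of_ne _ _ _ (Ne.symm hj)]
    exact of_injective i ((directSumLeft S S F L).symm.injective this)
  · intro h a b hab
    apply (directSumLeft S S F L).injective
    refine DFinsupp.ext fun j => h j ?_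
    refine (aux_apply F f a j).symm.trans (Eq.trans ?_ (aux_apply F f b j))
    rw [hab]

theorem aux_sub : SubtractiveSet (Set.range (LinearMap.lTensor (⨁ i, F i) f)) ↔
    ∀ i, SubtractiveSet (Set.range (LinearMap.lTensor (F i) f)) := by
  have key : ∀ i (z : F i ⊗[S] M), z ∈ Set.range (LinearMap.lTensor (F i) f) ↔
      (directSumLeft S S F M).symm (of (fun i => F i ⊗[S] M) i z) ∈
        Set.range (LinearMap.lTensor (⨁ i, F i) f) := by
    intro i z
    rw [aux_mem]
    simp only [LinearEquiv.apply_symm_apply]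
    constructor
    · intro h j
      by_cases hj : i = j
      · subst hj
        rwa [of_eq_same]
      · rw [of_eq_of_ne _ _ _ (Ne.symm hj)]
        exact ⟨0, map_zero _⟩
    · intro h
      have := h i
      rwa [of_eq_same] at this
  constructor
  · intro h i m l hml hl
    rw [key] at hml hl ⊢
    rw [map_add, map_add] at hml
    exact h _ _ hml hl
  · intro h m l hml hl
    rw [aux_mem] at hml hl ⊢
    intro i
    have := hml i
    rw [map_add, DirectSum.add_apply] at this
    exact h i _ _ this (hl i)

end Helpers

open DirectSum in
/-- a direct sum is `M`-i-flat (resp. `M`-e-flat, `M`-m-flat) iff every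
summand is. -/
theorem stmt11 {S M : Type*} [CommSemiring S] [AddCommMonoid M] [Module S M]
    {ι : Type*} [DecidableEq ι] [Nonempty ι]
    (F : ι → Type*) [∀ i, AddCommMonoid (F i)] [∀ i, Module S (F i)] :
    (MIFlat S (⨁ i, F i) M ↔ ∀ i, MIFlat S (F i) M) ∧
    (MEFlat S (⨁ i, F i) M ↔ ∀ i, MEFlat S (F i) M) ∧
    (MMFlat S (⨁ i, F i) M ↔ ∀ i, MMFlat S (F i) M) := by
  refine ⟨⟨fun h i L hL => (aux_inj F _).1 (h L hL) i,
      fun h L hL => (aux_inj F _).2 fun i => h i L hL⟩,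
    ⟨fun h i L hL => ⟨(aux_inj F _).1 (h L hL).1 i, (aux_sub F _).1 (h L hL).2 i⟩,
      fun h L hL => ⟨(aux_inj F _).2 fun i => (h i L hL).1,
        (aux_sub F _).2 fun i => (h i L hL).2⟩⟩,
    ⟨fun h i L => (aux_inj F _).1 (h L) i, fun h L => (aux_inj F _).2 fun i => h i L⟩⟩
end

section
/- Let S be a commutative semiring, F an S-semimodule, and 0 → L →f M →g N → 0 a short exact sequence of S-semimodules. Then: (1) if F is M-i-flat (respectively M-e-flat, respectively M-m-flat), then F is L-i-flat (respectively L-e-flat, respectively L-m-flat); (2) if F is M-m-flat (respectively M-i-flat), then F is N-m-flat (respectively N-i-flat). -/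
open TensorProduct

theorem bourne_aux {S F L M N : Type*} [CommSemiring S]
    [AddCommMonoid F] [AddCommMonoid L] [AddCommMonoid M] [AddCommMonoid N]
    [Module S F] [Module S L] [Module S M] [Module S N]
    (f : L →ₗ[S] M) (g : M →ₗ[S] N) (hses : IsShortExactSeq f g)
    (u v : F ⊗[S] M) (h : LinearMap.lTensor F g u = LinearMap.lTensor F g v) :
    ∃ z z' : F ⊗[S] L, u + LinearMap.lTensor F f z = v + LinearMap.lTensor F f z' := by
  obtain ⟨-, hk, hs, hn⟩ := hses
  let c : AddCon (F ⊗[S] M) :=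
    { r := fun u v => ∃ z z' : F ⊗[S] L,
        u + LinearMap.lTensor F f z = v + LinearMap.lTensor F f z'
      iseqv := by
        refine ⟨fun u => ⟨0, 0, rfl⟩, fun ⟨z, z', h⟩ => ⟨z', z, h.symm⟩, ?_⟩
        rintro a b d ⟨z, z', h⟩ ⟨w, w', h'⟩
        refine ⟨z + w, z' + w', ?_⟩
        rw [map_add, map_add, ← add_assoc, h, add_right_comm, h', add_right_comm, add_assoc]
      add' := by
        rintro a b d e ⟨z, z', h⟩ ⟨w, w', h'⟩
        refine ⟨z + w, z' + w', ?_⟩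
        rw [map_add, map_add, add_add_add_comm, h, h', add_add_add_comm] }
  have key : ∀ (a : F) (m m' : M), g m = g m' →
      ((a ⊗ₜ[S] m : F ⊗[S] M) : c.Quotient) = ((a ⊗ₜ[S] m' : F ⊗[S] M) : c.Quotient) := by
    intro a m m' hm
    obtain ⟨k, k', h1, h2, h3⟩ := hn m m' hm
    obtain ⟨l, rfl⟩ := (hk k).1 h1
    obtain ⟨l', rfl⟩ := (hk k').1 h2
    refine (AddCon.eq c).2 ⟨a ⊗ₜ l, a ⊗ₜ l', ?_⟩
    simp only [LinearMap.lTensor_tmul, ← TensorProduct.tmul_add, h3]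
  let s := Function.surjInv hs
  have hgs : ∀ n, g (s n) = n := Function.surjInv_eq hs
  let B : F →+ N →+ c.Quotient :=
    { toFun := fun a =>
        { toFun := fun n => ((a ⊗ₜ[S] s n : F ⊗[S] M) : c.Quotient)
          map_zero' := by
            rw [key a (s 0) 0 (by rw [hgs, map_zero]), TensorProduct.tmul_zero]
            rfl
          map_add' := fun x y => by
            rw [key a (s (x + y)) (s x + s y) (by rw [hgs, map_add, hgs, hgs]),
              TensorProduct.tmul_add]
            rfl }
      map_zero' := by
        ext n
        change ((0 ⊗ₜ[S] s n : F ⊗[S] M) : c.Quotient) = 0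
        rw [TensorProduct.zero_tmul]
        rfl
      map_add' := fun a b => by
        ext n
        change (((a + b) ⊗ₜ[S] s n : F ⊗[S] M) : c.Quotient) =
          ((a ⊗ₜ[S] s n : F ⊗[S] M) : c.Quotient) + ((b ⊗ₜ[S] s n : F ⊗[S] M) : c.Quotient)
        rw [TensorProduct.add_tmul]
        rfl }
  let Φ : F ⊗[S] N →+ c.Quotient := TensorProduct.liftAddHom B (by
    intro r a n
    change (((r • a) ⊗ₜ[S] s n : F ⊗[S] M) : c.Quotient) =
      ((a ⊗ₜ[S] s (r • n) : F ⊗[S] M) : c.Quotient)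
    rw [key a (s (r • n)) (r • s n) (by rw [hgs, map_smul, hgs]), TensorProduct.smul_tmul])
  have hΦ : ∀ w : F ⊗[S] M, Φ (LinearMap.lTensor F g w) = (w : c.Quotient) := by
    intro w
    induction w with
    | zero => rw [map_zero, map_zero]; rfl
    | tmul a m =>
      rw [LinearMap.lTensor_tmul]
      change ((a ⊗ₜ[S] s (g m) : F ⊗[S] M) : c.Quotient) = _
      exact key a _ _ (hgs _)
    | add x y hx hy => rw [map_add, map_add, hx, hy]; rfl
  have : (u : c.Quotient) = (v : c.Quotient) := by rw [← hΦ, ← hΦ, h]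
  exact (AddCon.eq c).1 this

theorem sub_aux {S F L M : Type*} [CommSemiring S]
    [AddCommMonoid F] [AddCommMonoid L] [AddCommMonoid M]
    [Module S F] [Module S L] [Module S M]
    (f : L →ₗ[S] M) (hf : Function.Injective f) (K : Submodule S L) :
    ∃ e : F ⊗[S] K ≃ₗ[S] F ⊗[S] (K.map f), ∀ x,
      LinearMap.lTensor F (K.map f).subtype (e x) =
        LinearMap.lTensor F f (LinearMap.lTensor F K.subtype x) := by
  refine ⟨LinearEquiv.lTensor F (Submodule.equivMapOfInjective f hf K), fun x => ?_⟩
  induction x with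
  | zero => simp
  | tmul a m => simp
  | add x y hx hy => simp only [map_add, hx, hy]

theorem inj_aux {S F L M : Type*} [CommSemiring S]
    [AddCommMonoid F] [AddCommMonoid L] [AddCommMonoid M]
    [Module S F] [Module S L] [Module S M]
    (f : L →ₗ[S] M) (hf : Function.Injective f) (K : Submodule S L)
    (h : Function.Injective (LinearMap.lTensor F (K.map f).subtype)) :
    Function.Injective (LinearMap.lTensor F K.subtype) := by
  obtain ⟨e, he⟩ := sub_aux (F := F) f hf K
  intro x y hxy
  apply e.injective
  apply h
  rw [he, he, hxy]

theorem subtr_aux {S L M N : Type*} [CommSemiring S]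
    [AddCommMonoid L] [AddCommMonoid M] [AddCommMonoid N]
    [Module S L] [Module S M] [Module S N]
    (f : L →ₗ[S] M) (g : M →ₗ[S] N) (hses : IsShortExactSeq f g)
    (K : Submodule S L) (hK : SubtractiveSet (K : Set L)) :
    SubtractiveSet ((K.map f : Submodule S M) : Set M) := by
  obtain ⟨hf, hk, -, -⟩ := hses
  rintro m _ ⟨a, ha, h⟩ ⟨b, hb, rfl⟩
  have h0 : g m = 0 := by
    have h1 := congrArg g h
    rw [map_add, (hk (f a)).2 ⟨a, rfl⟩, (hk (f b)).2 ⟨b, rfl⟩, add_zero] at h1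
    exact h1.symm
  obtain ⟨l, rfl⟩ := (hk m).1 h0
  rw [← map_add] at h
  have := hf h
  exact ⟨l, hK l b (by rw [← this]; exact ha) hb, rfl⟩

theorem quot_aux {S F L M N : Type*} [CommSemiring S]
    [AddCommMonoid F] [AddCommMonoid L] [AddCommMonoid M] [AddCommMonoid N]
    [Module S F] [Module S L] [Module S M] [Module S N]
    (f : L →ₗ[S] M) (g : M →ₗ[S] N) (hses : IsShortExactSeq f g) (K : Submodule S N)
    (h : Function.Injective (LinearMap.lTensor F (K.comap g).subtype)) :
    Function.Injective (LinearMap.lTensor F K.subtype) := by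
  have hg0 : ∀ l, g (f l) = 0 := fun l => (hses.2.1 _).2 ⟨l, rfl⟩
  let p : K.comap g →ₗ[S] K := g.restrict (fun _ hx => hx)
  have hp : Function.Surjective p := by
    rintro ⟨n, hn⟩
    obtain ⟨m, rfl⟩ := hses.2.2.1 n
    exact ⟨⟨m, hn⟩, rfl⟩
  let j : L →ₗ[S] K.comap g := f.codRestrict _ (fun l => by
    rw [Submodule.mem_comap, hg0]; exact K.zero_mem)
  have e1 : ∀ w, LinearMap.lTensor F K.subtype (LinearMap.lTensor F p w) =
      LinearMap.lTensor F g (LinearMap.lTensor F (K.comap g).subtype w) := by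
    intro w
    rw [← LinearMap.lTensor_comp_apply, ← LinearMap.lTensor_comp_apply]
    rfl
  have e2 : ∀ z, LinearMap.lTensor F (K.comap g).subtype (LinearMap.lTensor F j z) =
      LinearMap.lTensor F f z := by
    intro z
    rw [← LinearMap.lTensor_comp_apply]
    rfl
  have e3 : ∀ z, LinearMap.lTensor F p (LinearMap.lTensor F j z) = 0 := by
    intro z
    rw [← LinearMap.lTensor_comp_apply]
    have : p ∘ₗ j = 0 := by
      ext l
      exact hg0 l
    rw [this, LinearMap.lTensor_zero, LinearMap.zero_apply]
  intro x y hxy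
  obtain ⟨x, rfl⟩ := LinearMap.lTensor_surjective F hp x
  obtain ⟨y, rfl⟩ := LinearMap.lTensor_surjective F hp y
  rw [e1, e1] at hxy
  obtain ⟨z, z', hz⟩ := bourne_aux f g hses _ _ hxy
  rw [← e2, ← e2, ← map_add, ← map_add] at hz
  have := congrArg (LinearMap.lTensor F p) (h hz)
  rwa [map_add, map_add, e3, e3, add_zero, add_zero] at this

/-- relative flatness passes from the middle term of a short exact
sequence to the kernel term, and m- or i-flatness also to the cokernel term. -/
theorem stmt12 {S F L M N : Type*} [CommSemiring S]
    [AddCommMonoid F] [AddCommMonoid L] [AddCommMonoid M] [AddCommMonoid N]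
    [Module S F] [Module S L] [Module S M] [Module S N]
    (f : L →ₗ[S] M) (g : M →ₗ[S] N) (hses : IsShortExactSeq f g) :
    ((MIFlat S F M → MIFlat S F L) ∧
      (MEFlat S F M → MEFlat S F L) ∧
      (MMFlat S F M → MMFlat S F L)) ∧
    ((MMFlat S F M → MMFlat S F N) ∧
      (MIFlat S F M → MIFlat S F N)) := by
  refine ⟨⟨?_, ?_, ?_⟩, ?_, ?_⟩
  · intro h K hK
    exact inj_aux f hses.1 K (h _ (subtr_aux f g hses K hK))
  · intro h K hK
    have hM := h _ (subtr_aux f g hses K hK)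
    refine ⟨inj_aux f hses.1 K hM.1, ?_⟩
    have hT := (h _ (subtr_aux f g hses ⊤ (fun _ _ _ _ => trivial))).1
    obtain ⟨e', he'⟩ := sub_aux (F := F) f hses.1 ⊤
    have hinj : Function.Injective (LinearMap.lTensor F f) := by
      have hs : Function.Surjective (LinearMap.lTensor F (⊤ : Submodule S L).subtype) :=
        LinearMap.lTensor_surjective F (fun l => ⟨⟨l, trivial⟩, rfl⟩)
      intro x y hxy
      obtain ⟨x, rfl⟩ := hs x
      obtain ⟨y, rfl⟩ := hs y
      rw [← he', ← he'] at hxy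
      rw [e'.injective (hT hxy)]
    obtain ⟨e, he⟩ := sub_aux (F := F) f hses.1 K
    rintro x _ ⟨a, ha⟩ ⟨b, rfl⟩
    obtain ⟨w, hw⟩ := hM.2 (LinearMap.lTensor F f x) _
      ⟨e a, by rw [he, ha, map_add]⟩ ⟨e b, he b⟩
    obtain ⟨w, rfl⟩ := e.surjective w
    rw [he] at hw
    exact ⟨w, hinj hw⟩
  · intro h K
    exact inj_aux f hses.1 K (h _)
  · intro h K
    exact quot_aux f g hses K (h _)
  · intro h K hK
    refine quot_aux f g hses K (h _ ?_)
    intro m l h1 h2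
    refine hK (g m) (g l) ?_ h2
    rw [← map_add]
    exact h1
end

section
/- Let S be a commutative semiring and F, M S-semimodules. Then F is M-m-flat if and only if for every finitely generated submodule K ≤ M the map id_F ⊗ ι_K : F⊗K → F⊗M is injective. -/
open TensorProduct

/-- `F` is `M`-m-flat iff `id_F ⊗ ι_K` is injective for every finitely
generated submodule `K ≤ M`. -/
theorem stmt13 {S F M : Type*} [CommSemiring S] [AddCommMonoid F] [AddCommMonoid M]
    [Module S F] [Module S M] :
    MMFlat S F M ↔
      ∀ K : Submodule S M, K.FG → Function.Injective (LinearMap.lTensor F K.subtype) := by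
  constructor
  · intro h K _
    exact h K
  · intro h L x y hxy
    obtain ⟨K, hK, hfin, hs⟩ :=
      TensorProduct.exists_finite_submodule_right_of_setFinite' (R := S) (N₁ := L)
        (M₁ := (⊤ : Submodule S F))
        (((TensorProduct.congr (Submodule.topEquiv (R := S) (M := F)).symm
          (LinearEquiv.refl S L)) : F ⊗[S] L → _) '' {x, y}) (Set.Finite.image _ (by simp))
    have key : ∀ z ∈ ({x, y} : Set (F ⊗[S] L)),
        ∃ w : F ⊗[S] K, (Submodule.inclusion hK).lTensor F w = z := by
      intro z hz
      obtain ⟨w, hw⟩ := hs (Set.mem_image_of_mem _ hz)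
      refine ⟨TensorProduct.congr (Submodule.topEquiv (R := S) (M := F))
        (LinearEquiv.refl S K) w, ?_⟩
      have h1 := congrArg (TensorProduct.congr (Submodule.topEquiv (R := S) (M := F))
        (LinearEquiv.refl S L)) hw
      have h2 : ∀ z : F ⊗[S] L, TensorProduct.congr (Submodule.topEquiv (R := S) (M := F))
          (LinearEquiv.refl S L) (TensorProduct.congr
          (Submodule.topEquiv (R := S) (M := F)).symm (LinearEquiv.refl S L) z) = z :=
        fun z => (TensorProduct.congr (Submodule.topEquiv (R := S) (M := F))
          (LinearEquiv.refl S L)).apply_symm_apply z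
      rw [h2] at h1
      rw [← h1]
      clear h1 hw
      induction w with
      | zero => simp
      | tmul a b => simp
      | add a b ha hb => simp only [map_add, ha, hb]
    obtain ⟨x', rfl⟩ := key x (by simp)
    obtain ⟨y', rfl⟩ := key y (by simp)
    have hK' : K.FG := Module.Finite.iff_fg.mp hfin
    rw [← LinearMap.lTensor_comp_apply, ← LinearMap.lTensor_comp_apply,
      Submodule.subtype_comp_inclusion] at hxy
    rw [h K hK' hxy]
end

section
/- Let S be a commutative semiring and A an S-semimodule. For an ideal I ≤ S (a submodule of S as a module over itself), let θ_I : A ⊗_S I → A be the S-linear map sending a ⊗ i to i • a; its image is the submodule I•A. Then: (1) A is S-m-flat if and only if θ_I is injective for every finitely generated ideal I of S, if and only if θ_I is injective for every ideal I of S; (2) A is S-i-flat if and only if θ_I is injective for every subtractive ideal I of S; (3) A is S-e-flat if and only if for every subtractive ideal I of S, θ_I is injective and the submodule I•A is subtractive in A. -/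
open TensorProduct

theorem thetaI_tmul' {S A : Type*} [CommSemiring S] [AddCommMonoid A] [Module S A]
    (I : Submodule S S) (a : A) (i : I) : thetaI S A I (a ⊗ₜ[S] i) = (i : S) • a := by
  simp [thetaI]

theorem thetaI_inj_iff {S A : Type*} [CommSemiring S] [AddCommMonoid A] [Module S A]
    (I : Submodule S S) : Function.Injective (thetaI S A I) ↔
      Function.Injective (LinearMap.lTensor A I.subtype) := by
  unfold thetaI
  rw [LinearMap.coe_comp]
  exact (TensorProduct.rid S A).injective.of_comp_iff _

theorem range_thetaI {S A : Type*} [CommSemiring S] [AddCommMonoid A] [Module S A]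
    (I : Submodule S S) : LinearMap.range (thetaI S A I) = I • (⊤ : Submodule S A) := by
  apply le_antisymm
  · rintro _ ⟨x, rfl⟩
    induction x with
    | zero => simp
    | tmul a i =>
      rw [thetaI_tmul']
      exact Submodule.smul_mem_smul i.2 trivial
    | add x y hx hy =>
      rw [map_add]
      exact add_mem hx hy
  · intro x hx
    refine Submodule.smul_induction_on hx ?_ ?_
    · intro r hr n _
      exact ⟨n ⊗ₜ[S] (⟨r, hr⟩ : I), thetaI_tmul' I n ⟨r, hr⟩⟩
    · intro x y hx hy
      exact add_mem hx hy

theorem thetaI_inj_of_fg {S A : Type*} [CommSemiring S] [AddCommMonoid A] [Module S A]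
    (H : ∀ I : Submodule S S, I.FG → Function.Injective (thetaI S A I))
    (I : Submodule S S) : Function.Injective (thetaI S A I) := by
  intro x y hxy
  obtain ⟨N, hN, hs⟩ := TensorProduct.exists_finite_submodule_right_of_setFinite
    ({x, y} : Set (A ⊗[S] I)) (by simp)
  obtain ⟨x', rfl⟩ := hs (show x ∈ _ by simp)
  obtain ⟨y', rfl⟩ := hs (show y ∈ _ by simp)
  have hJ : (N.map I.subtype).FG := (Module.Finite.iff_fg.1 hN).map _
  have hle : N.map I.subtype ≤ I := Submodule.map_subtype_le I N
  let g : N →ₗ[S] (N.map I.subtype : Submodule S S) := I.subtype.submoduleMap N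
  have e1 : Submodule.inclusion hle ∘ₗ g = N.subtype := by
    ext n; rfl
  have e2 : ∀ z, thetaI S A (N.map I.subtype) (g.lTensor A z) =
      thetaI S A I (N.subtype.lTensor A z) := by
    intro z
    induction z with
    | zero => simp
    | tmul a n =>
      rw [LinearMap.lTensor_tmul, LinearMap.lTensor_tmul, thetaI_tmul', thetaI_tmul']
      rfl
    | add x y hx hy => simp only [map_add, hx, hy]
  have h3 := H _ hJ ((e2 x').trans (hxy.trans (e2 y').symm))
  rw [← e1, LinearMap.lTensor_comp, LinearMap.comp_apply, LinearMap.comp_apply, h3]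

theorem subtractive_iff {S A : Type*} [CommSemiring S] [AddCommMonoid A] [Module S A]
    (I : Submodule S S) :
    SubtractiveSet (Set.range (LinearMap.lTensor A I.subtype)) ↔
      SubtractiveSet ((I • (⊤ : Submodule S A) : Submodule S A) : Set A) := by
  have key : ∀ z : A ⊗[S] S, z ∈ Set.range (LinearMap.lTensor A I.subtype) ↔
      TensorProduct.rid S A z ∈ ((I • (⊤ : Submodule S A) : Submodule S A) : Set A) := by
    intro z
    rw [← range_thetaI]
    constructor
    · rintro ⟨x, rfl⟩
      exact ⟨x, rfl⟩
    · rintro ⟨x, hx⟩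
      exact ⟨x, (TensorProduct.rid S A).injective hx⟩
  constructor
  · intro h m l hm hl
    have := h ((TensorProduct.rid S A).symm m) ((TensorProduct.rid S A).symm l)
    rw [key, key, key, map_add, LinearEquiv.apply_symm_apply, LinearEquiv.apply_symm_apply] at this
    exact this hm hl
  · intro h m l hm hl
    rw [key] at *
    rw [map_add] at hm
    exact h _ _ hm hl

/-- characterizations of `S`-m-flat, `S`-i-flat and `S`-e-flat semimodules
via the canonical maps `θ_I : A ⊗ I → A`. -/
theorem stmt15 {S A : Type*} [CommSemiring S] [AddCommMonoid A] [Module S A] :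
    (∀ I : Submodule S S, LinearMap.range (thetaI S A I) = I • (⊤ : Submodule S A)) ∧
    ((SMFlat S A ↔ ∀ I : Submodule S S, I.FG → Function.Injective (thetaI S A I)) ∧
      (SMFlat S A ↔ ∀ I : Submodule S S, Function.Injective (thetaI S A I))) ∧
    (SIFlat S A ↔ ∀ I : Submodule S S, SubtractiveSet (I : Set S) →
        Function.Injective (thetaI S A I)) ∧
    (SEFlat S A ↔ ∀ I : Submodule S S, SubtractiveSet (I : Set S) →
        Function.Injective (thetaI S A I) ∧
          SubtractiveSet ((I • (⊤ : Submodule S A) : Submodule S A) : Set A)) := by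
  refine ⟨range_thetaI, ⟨⟨fun h I _ => (thetaI_inj_iff I).2 (h I),
    fun h I => (thetaI_inj_iff I).1 (thetaI_inj_of_fg h I)⟩,
    forall_congr' fun I => (thetaI_inj_iff I).symm⟩,
    forall_congr' fun I => imp_congr_right fun _ => (thetaI_inj_iff I).symm,
    forall_congr' fun I => imp_congr_right fun _ =>
      and_congr (thetaI_inj_iff I).symm (subtractive_iff I)⟩
end

section
/- Let S be a commutative von Neumann regular semiring that is Bézout, i.e. every finitely generated ideal of S is principal. Then every normally S-generated S-semimodule A — one admitting a surjective k-normal S-linear map π : S^{(Λ)} → A from a free S-semimodule — is S-m-flat, i.e. for every ideal I ≤ S the map id_A ⊗ ι_I : A ⊗ I → A ⊗ S is injective. -/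
open TensorProduct

/-- over a Bézout von Neumann regular commutative semiring, every
normally `S`-generated semimodule is `S`-m-flat. -/
theorem stmt18 {S : Type*} [CommSemiring S]
    (hvn : ∀ a : S, ∃ s : S, a = a * s * a)
    (hbez : ∀ I : Ideal S, I.FG → ∃ a : S, I = Ideal.span {a})
    {A : Type*} [AddCommMonoid A] [Module S A]
    (Λ : Type*) (π : (Λ →₀ S) →ₗ[S] A)
    (hπs : Function.Surjective π) (hπk : KNormal π) :
    ∀ I : Submodule S S, Function.Injective (LinearMap.lTensor A I.subtype) := by
  classical
  intro I
  have key : ∀ j ∈ I, ∀ k ∈ I, ∃ e ∈ I, j * e = j ∧ k * e = k := by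
    intro j hj k hk
    obtain ⟨a, ha⟩ := hbez (Ideal.span {j, k}) ⟨{j, k}, by simp⟩
    obtain ⟨s, hs⟩ := hvn a
    have haI : a ∈ I := by
      have h1 : a ∈ Ideal.span {j, k} := by
        rw [ha]; exact Ideal.mem_span_singleton_self a
      have h2 : Ideal.span {j, k} ≤ I := by
        rw [Ideal.span_le]
        rintro x (rfl | rfl)
        · exact hj
        · exact hk
      exact h2 h1
    have hm : ∀ x ∈ Ideal.span {j, k}, x * (s * a) = x := by
      intro x hx
      rw [ha, Ideal.mem_span_singleton'] at hx
      obtain ⟨t, rfl⟩ := hx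
      calc t * a * (s * a) = t * (a * s * a) := by ring
        _ = t * a := by rw [← hs]
    exact ⟨s * a, I.smul_mem s haI, hm j (Ideal.subset_span (by simp)),
      hm k (Ideal.subset_span (by simp))⟩
  have rep : ∀ x : TensorProduct S A I, ∃ e ∈ I, ∀ f : I, e * (f : S) = e →
      x = (thetaI S A I x) ⊗ₜ[S] f := by
    intro x
    induction x using TensorProduct.induction_on with
    | zero => exact ⟨0, I.zero_mem, fun f _ => by simp⟩
    | tmul a j =>
      obtain ⟨e, he, h1, -⟩ := key j j.2 j j.2
      refine ⟨e, he, fun f hf => ?_⟩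
      have hj : (j : S) • f = j := by
        apply Subtype.ext
        change (j : S) * (f : S) = j
        calc (j : S) * (f : S) = j * e * f := by rw [h1]
          _ = j * (e * f) := by ring
          _ = j := by rw [hf, h1]
      have ht : thetaI S A I (a ⊗ₜ[S] j) = (j : S) • a := by simp [thetaI]
      rw [ht, TensorProduct.smul_tmul, hj]
    | add x y hx hy =>
      obtain ⟨e, he, h1⟩ := hx
      obtain ⟨e', he', h2⟩ := hy
      obtain ⟨g, hg, h3, h4⟩ := key e he e' he'
      refine ⟨g, hg, fun f hf => ?_⟩
      rw [map_add, TensorProduct.add_tmul, ← h1 f ?_, ← h2 f ?_]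
      · calc e' * (f : S) = e' * g * f := by rw [h4]
          _ = e' * (g * f) := by ring
          _ = e' := by rw [hf, h4]
      · calc e * (f : S) = e * g * f := by rw [h3]
          _ = e * (g * f) := by ring
          _ = e := by rw [hf, h3]
  intro x y hxy
  obtain ⟨e, he, h1⟩ := rep x
  obtain ⟨e', he', h2⟩ := rep y
  obtain ⟨g, hg, h3, h4⟩ := key e he e' he'
  have hθ : thetaI S A I x = thetaI S A I y := by
    simp only [thetaI, LinearMap.comp_apply, hxy]
  rw [h1 ⟨g, hg⟩ h3, h2 ⟨g, hg⟩ h4, hθ]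
end
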